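/- There exists a constant C₁ > 0 such that for all sufficiently large integers Q: #{1 ≤ q ≤ Q : F(q) > C₁·(log log Q)²} ≤ Q/(log Q)², where F(q) = ∑_{r | q} (log r)/r. -/

import Mathlib

open Filter

/-- `F(q) = ∑_{r | q} (log₂ r)/r`. -/
noncomputable def Ffun (q : ℕ) : ℝ := ∑ r ∈ q.divisors, Real.logb 2 r / r

/-!
For large `Q` the exceptional set is empty, because `F(q) ≪ (log log Q)²` for every `q ≤ Q`. Write
`S = ∑_{r ∣ q} (log r)/r`, `G = ∑_{d ∣ q} Λ(d)/d` and `H = ∑_{e ∣ q} 1/e`. Since `log = Λ * 1`,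
we have `S ≤ G H`. The divisors `d > log Q` contribute at most `1` to `G`, as
`∑_{d ∣ q} Λ(d) = log q`, and Mertens' bound controls the others, so `G ≤ B` for some
`B = log log Q + O(1)`. Finally `H ≤ 1 + L + S / L` for every `L > 0`, on splitting at `e = exp L`;
for `L = 2 B` the term `S / L ≤ H / 2` is absorbed, so `H ≪ B` and `S ≪ B²`.
-/

open Finset Real
open ArithmeticFunction hiding log
open scoped ArithmeticFunction.zeta

lemma sum_le_sum_add_sum_mul_of_one_le {ι R : Type*} [Semiring R] [PartialOrder R]
    [IsOrderedRing R] {s t : Finset ι} {f w : ι → R} (hf : ∀ i, 0 ≤ f i)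
    (hw_nonneg : ∀ i ∈ s, 0 ≤ w i) (hw_one_le : ∀ i ∈ s, i ∉ t → 1 ≤ w i) :
    ∑ i ∈ s, f i ≤ ∑ i ∈ t, f i + ∑ i ∈ s, f i * w i := by
  classical
  rw [← sum_filter_add_sum_filter_not s (· ∈ t) f]
  refine add_le_add ?_ ?_
  · exact sum_le_sum_of_subset_of_nonneg (fun i hi ↦ (mem_filter.1 hi).2) fun i _ _ ↦ hf i
  · calc ∑ i ∈ s with i ∉ t, f i
        ≤ ∑ i ∈ s with i ∉ t, f i * w i := sum_le_sum fun i hi ↦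
          le_mul_of_one_le_right (hf i) (hw_one_le i (mem_filter.1 hi).1 (mem_filter.1 hi).2)
      _ ≤ ∑ i ∈ s, f i * w i := sum_le_sum_of_subset_of_nonneg (filter_subset _ _)
          fun i hi _ ↦ mul_nonneg (hf i) (hw_nonneg i hi)

lemma lt_natCast_of_notMem_Ioc_floor {n : ℕ} {y : ℝ} (hn : 0 < n) (h : n ∉ Ioc 0 ⌊y⌋₊) :
    y < n := by
  by_contra! hny
  exact h (mem_Ioc.2 ⟨hn, Nat.le_floor hny⟩)

lemma log_le_logb {b x : ℝ} (hb : 1 < b) (hb' : b ≤ exp 1) (hx : 1 ≤ x) : log x ≤ logb b x := by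
  have hlogb : log b ≤ 1 := (log_le_iff_le_exp (by linarith)).2 hb'
  exact le_div_self (log_nonneg hx) (log_pos hb) hlogb

section DivisorSums

variable {q : ℕ}

lemma divisorsAntidiagonal_eq_filter_product_divisors {r : ℕ} (hr : r ∈ q.divisors) :
    r.divisorsAntidiagonal = {x ∈ q.divisors ×ˢ q.divisors | x.1 * x.2 = r} := by
  obtain ⟨hrq, hq⟩ := Nat.mem_divisors.1 hr
  ext ⟨d, e⟩
  simp only [Nat.mem_divisorsAntidiagonal, mem_filter, mem_product, Nat.mem_divisors]
  constructor
  · rintro ⟨rfl, -⟩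
    exact ⟨⟨⟨dvd_of_mul_right_dvd hrq, hq⟩, dvd_of_mul_left_dvd hrq, hq⟩, rfl⟩
  · rintro ⟨-, rfl⟩
    exact ⟨rfl, ne_zero_of_dvd_ne_zero hq hrq⟩

lemma sum_divisors_mul_div_le {f g : ArithmeticFunction ℝ} (hf : ∀ n, 0 ≤ f n)
    (hg : ∀ n, 0 ≤ g n) :
    ∑ r ∈ q.divisors, (f * g) r / r ≤
      (∑ d ∈ q.divisors, f d / d) * ∑ e ∈ q.divisors, g e / e := by
  have hnonneg (x : ℕ × ℕ) : 0 ≤ f x.1 / x.1 * (g x.2 / x.2) :=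
    mul_nonneg (div_nonneg (hf _) (Nat.cast_nonneg _)) (div_nonneg (hg _) (Nat.cast_nonneg _))
  calc ∑ r ∈ q.divisors, (f * g) r / r
      = ∑ r ∈ q.divisors, ∑ x ∈ q.divisors ×ˢ q.divisors with x.1 * x.2 = r,
          f x.1 / x.1 * (g x.2 / x.2) := by
        refine sum_congr rfl fun r hr ↦ ?_
        rw [mul_apply, sum_div, divisorsAntidiagonal_eq_filter_product_divisors hr]
        refine sum_congr rfl fun x hx ↦ ?_
        rw [← (mem_filter.1 hx).2, Nat.cast_mul, mul_div_mul_comm]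
    _ ≤ ∑ x ∈ q.divisors ×ˢ q.divisors, f x.1 / x.1 * (g x.2 / x.2) :=
        sum_fiberwise_le_sum_of_sum_fiber_nonneg fun _ _ ↦ sum_nonneg fun x _ ↦ hnonneg x
    _ = (∑ d ∈ q.divisors, f d / d) * ∑ e ∈ q.divisors, g e / e := by
        rw [sum_mul_sum, sum_product]

lemma sum_divisors_log_div_le_mul :
    ∑ r ∈ q.divisors, log r / r ≤ (∑ d ∈ q.divisors, Λ d / d) * ∑ e ∈ q.divisors, (e : ℝ)⁻¹ := by
  have h := sum_divisors_mul_div_le (f := Λ) (g := (ζ : ArithmeticFunction ℝ)) (q := q)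
    (fun _ ↦ vonMangoldt_nonneg) fun n ↦ by rw [natCoe_apply]; positivity
  rw [vonMangoldt_mul_zeta] at h
  convert! h using 2
  refine sum_congr rfl fun e he ↦ ?_
  rw [natCoe_apply, zeta_apply_ne (Nat.pos_of_mem_divisors he).ne', Nat.cast_one, one_div]

lemma sum_divisors_inv_le {L : ℝ} (hL : 0 < L) :
    ∑ e ∈ q.divisors, (e : ℝ)⁻¹ ≤ 1 + L + (∑ r ∈ q.divisors, log r / r) / L := by
  have hsmall : ∑ e ∈ Ioc 0 ⌊exp L⌋₊, (e : ℝ)⁻¹ ≤ 1 + L := by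
    have h := harmonic_floor_le_one_add_log (exp L) (one_le_exp hL.le)
    rw [log_exp, harmonic_eq_sum_Icc] at h
    push_cast at h
    exact h
  calc ∑ e ∈ q.divisors, (e : ℝ)⁻¹
      ≤ ∑ e ∈ Ioc 0 ⌊exp L⌋₊, (e : ℝ)⁻¹ + ∑ e ∈ q.divisors, (e : ℝ)⁻¹ * (log e / L) := by
        refine sum_le_sum_add_sum_mul_of_one_le (fun e ↦ by positivity)
          (fun e _ ↦ div_nonneg (log_natCast_nonneg e) hL.le) fun e he hlarge ↦ ?_
        have he0 := Nat.pos_of_mem_divisors he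
        rw [one_le_div hL, le_log_iff_exp_le (Nat.cast_pos.2 he0)]
        exact (lt_natCast_of_notMem_Ioc_floor he0 hlarge).le
    _ = ∑ e ∈ Ioc 0 ⌊exp L⌋₊, (e : ℝ)⁻¹ + (∑ r ∈ q.divisors, log r / r) / L := by
        rw [sum_div]
        congr! 2
        ring
    _ ≤ 1 + L + (∑ r ∈ q.divisors, log r / r) / L := by gcongr

end DivisorSums

section Mertens

lemma natCast_mul_sum_Ioc_div_le {f : ArithmeticFunction ℝ} (hf : ∀ n, 0 ≤ f n) (N : ℕ) :
    N * ∑ d ∈ Ioc 0 N, f d / d ≤ ∑ n ∈ Ioc 0 N, (f * ζ) n + ∑ d ∈ Ioc 0 N, f d := by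
  rw [sum_Ioc_mul_zeta_eq_sum, mul_sum, ← sum_add_distrib]
  refine sum_le_sum fun d _ ↦ ?_
  have hfloor : (N / d : ℝ) ≤ (N / d : ℕ) + 1 := by
    rw [← Nat.floor_div_eq_div (K := ℝ)]
    exact (Nat.lt_floor_add_one _).le
  calc N * (f d / d) = f d * (N / d) := by ring
    _ ≤ f d * ((N / d : ℕ) + 1) := mul_le_mul_of_nonneg_left hfloor (hf d)
    _ = f d * (N / d : ℕ) + f d := by ring

lemma sum_Ioc_log_le (N : ℕ) : ∑ n ∈ Ioc 0 N, log n ≤ N * log N := by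
  calc ∑ n ∈ Ioc 0 N, log n ≤ ∑ _n ∈ Ioc 0 N, log N := sum_le_sum fun n hn ↦ by
        obtain ⟨hn0, hnN⟩ := mem_Ioc.1 hn
        gcongr
    _ = N * log N := by simp

lemma sum_Ioc_vonMangoldt_div_le {y : ℝ} (hy : 1 ≤ y) :
    ∑ d ∈ Ioc 0 ⌊y⌋₊, Λ d / d ≤ log y + (log 4 + 4) := by
  have hN : (0 : ℝ) < ⌊y⌋₊ := Nat.cast_pos.2 (Nat.floor_pos.2 hy)
  have hmono : log ⌊y⌋₊ ≤ log y := log_le_log hN (Nat.floor_le (by linarith))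
  have hpsi : ∑ d ∈ Ioc 0 ⌊y⌋₊, Λ d ≤ (log 4 + 4) * ⌊y⌋₊ := by
    simpa only [Chebyshev.psi, Nat.floor_natCast] using Chebyshev.psi_le_const_mul_self hN.le
  have hdiv := natCast_mul_sum_Ioc_div_le (f := Λ) (fun _ ↦ vonMangoldt_nonneg) ⌊y⌋₊
  simp only [vonMangoldt_mul_zeta, log_apply] at hdiv
  suffices ∑ d ∈ Ioc 0 ⌊y⌋₊, Λ d / d ≤ log ⌊y⌋₊ + (log 4 + 4) by linarith
  refine le_of_mul_le_mul_left ?_ hN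
  linarith [sum_Ioc_log_le ⌊y⌋₊]

end Mertens

section LogLogBound

variable {q : ℕ} {y : ℝ}

lemma sum_divisors_vonMangoldt_div_le (hy : 1 ≤ y) (hqy : log q ≤ y) :
    ∑ d ∈ q.divisors, Λ d / d ≤ log y + 7 := by
  have hy0 : 0 < y := by linarith
  have hlog4 : log 4 ≤ 2 := by
    rw [show (4 : ℝ) = 2 ^ 2 by norm_num, log_pow, Nat.cast_ofNat]
    linarith [log_two_lt_d9]
  have hlarge : ∑ d ∈ q.divisors, Λ d / d * (d / y) ≤ 1 := by
    calc ∑ d ∈ q.divisors, Λ d / d * (d / y) = ∑ d ∈ q.divisors, Λ d / y :=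
          sum_congr rfl fun d hd ↦
            div_mul_div_cancel₀ (Nat.cast_ne_zero.2 (Nat.pos_of_mem_divisors hd).ne')
      _ = log q / y := by rw [← sum_div, vonMangoldt_sum]
      _ ≤ 1 := (div_le_one hy0).2 hqy
  have hsplit : ∑ d ∈ q.divisors, Λ d / d ≤
      ∑ d ∈ Ioc 0 ⌊y⌋₊, Λ d / d + ∑ d ∈ q.divisors, Λ d / d * (d / y) :=
    sum_le_sum_add_sum_mul_of_one_le
      (fun d ↦ div_nonneg vonMangoldt_nonneg d.cast_nonneg) (fun d _ ↦ by positivity)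
      fun d hd hdy ↦ (one_le_div hy0).2
        (lt_natCast_of_notMem_Ioc_floor (Nat.pos_of_mem_divisors hd) hdy).le
  linarith [sum_Ioc_vonMangoldt_div_le hy]

lemma sum_divisors_log_div_le (hy : 1 ≤ y) (hqy : log q ≤ y) :
    ∑ r ∈ q.divisors, log r / r ≤ 6 * (log y + 7) ^ 2 := by
  set B := log y + 7
  set H := ∑ e ∈ q.divisors, (e : ℝ)⁻¹
  set S := ∑ r ∈ q.divisors, log r / r
  have hB : 7 ≤ B := le_add_of_nonneg_left (log_nonneg hy)
  have hH : 0 ≤ H := sum_nonneg fun _ _ ↦ by positivity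
  have hS : S ≤ B * H := sum_divisors_log_div_le_mul.trans <|
    mul_le_mul_of_nonneg_right (sum_divisors_vonMangoldt_div_le hy hqy) hH
  have hself : H ≤ 1 + 2 * B + S / (2 * B) := sum_divisors_inv_le (by linarith)
  have habsorb : S / (2 * B) ≤ H / 2 := by
    rw [div_le_iff₀ (by linarith)]
    linarith
  have hH' : H ≤ 6 * B := by linarith
  calc S ≤ B * H := hS
    _ ≤ B * (6 * B) := by gcongr
    _ = 6 * B ^ 2 := by ring

end LogLogBound

lemma Ffun_eq_sum_log_div (q : ℕ) : Ffun q = (∑ r ∈ q.divisors, log r / r) / log 2 := by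
  simp only [Ffun, sum_div, logb, div_right_comm]

lemma log_log_le_logb_two_logb_two {x : ℝ} (hx : exp 1 ≤ x) :
    log (log x) ≤ logb 2 (logb 2 x) := by
  have htwo : (2 : ℝ) ≤ exp 1 := by linarith [add_one_le_exp 1]
  have hlog : 1 ≤ log x := (le_log_iff_exp_le ((exp_pos 1).trans_le hx)).2 hx
  have hlogb : log x ≤ logb 2 x := log_le_logb one_lt_two htwo (by linarith)
  calc log (log x) ≤ log (logb 2 x) := log_le_log (by linarith) hlogb
    _ ≤ logb 2 (logb 2 x) := log_le_logb one_lt_two htwo (hlog.trans hlogb)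

theorem stmt14_general : ∃ C₁ > (0 : ℝ), ∀ᶠ Q : ℕ in atTop, ∀ q ≤ Q,
    Ffun q ≤ C₁ * logb 2 (logb 2 Q) ^ 2 := by
  have hlogQ : Tendsto (fun Q : ℕ ↦ log Q) atTop atTop :=
    tendsto_log_atTop.comp tendsto_natCast_atTop_atTop
  refine ⟨24 / log 2, by positivity, ?_⟩
  filter_upwards [tendsto_natCast_atTop_atTop.eventually_ge_atTop (exp 1),
    hlogQ.eventually_ge_atTop 1, (tendsto_log_atTop.comp hlogQ).eventually_ge_atTop 7]
    with Q hQ hlog (hloglog : 7 ≤ log (log Q)) q hqQ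
  have hlogq : log q ≤ log Q := by
    obtain rfl | hq := q.eq_zero_or_pos
    · simpa using log_natCast_nonneg Q
    · gcongr
  calc Ffun q = (∑ r ∈ q.divisors, log r / r) / log 2 := Ffun_eq_sum_log_div q
    _ ≤ 6 * (log (log Q) + 7) ^ 2 / log 2 := by gcongr; exact sum_divisors_log_div_le hlog hlogq
    _ ≤ 6 * (2 * logb 2 (logb 2 Q)) ^ 2 / log 2 := by
        gcongr
        linarith [log_log_le_logb_two_logb_two hQ]
    _ = 24 / log 2 * logb 2 (logb 2 Q) ^ 2 := by ring

open Classical in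
theorem stmt14 : ∃ C₁ > (0:ℝ), ∃ Q₀ : ℕ, ∀ Q : ℕ, Q₀ ≤ Q →
    (((Finset.Icc 1 Q).filter
        (fun q => C₁ * (Real.logb 2 (Real.logb 2 Q)) ^ 2 < Ffun q)).card : ℝ)
      ≤ (Q : ℝ) / (Real.logb 2 Q) ^ 2 := by
  obtain ⟨C₁, hC₁, hF⟩ := stmt14_general
  obtain ⟨Q₀, hQ₀⟩ := eventually_atTop.1 hF
  refine ⟨C₁, hC₁, Q₀, fun Q hQ ↦ ?_⟩
  rw [filter_false_of_mem fun q hq ↦ (hQ₀ Q hQ q (mem_Icc.1 hq).2).not_gt, card_empty,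
    Nat.cast_zero]
  positivity
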